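/- Let Φ be a face of the Voronoi decomposition of M̃ shared by Voronoi cells V(x₁) and V(x₂), with cell splitters t₁ and t₂ respectively (with respect to the Morse function h : M̃ → X̃ to the tree X̃). Then for a regular point t ∈ X̃ (a point which is neither a cell splitter nor a critical point of h), the polyhedral surface Σ_t contains the face Φ if and only if t lies on the geodesic in X̃ from t₁ to t₂. -/

import Mathlib

/-!
The proof works in an arbitrary topological space. If a component `D` of `{t}ᶜ` carries more than
half of the volume of a cell, then `D` contains every splitter `s` of that cell: otherwise `D`,
being connected and disjoint from `{s}`, lies in a single component of `{s}ᶜ`, whose closure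
carries at most half of the volume (`mem_of_majority`).

Since `t` is not a splitter of either cell, each cell has such a majority component, namely the
component of `{t}ᶜ` containing its splitter. Hence the cells lie on the same side of `t` exactly
when `t₁` and `t₂` lie in one component of `{t}ᶜ`, i.e. when some connected set containing
`t₁` and `t₂` avoids `t`, which says that `t` is not on the segment.
-/

universe u

open MeasureTheory

/-- The Voronoi cell of the point `x i` in the family `x : ι → M`. -/
def voronoiCell {M : Type u} [MetricSpace M] {ι : Type u} (x : ι → M) (i : ι) : Set M :=
  {z : M | ∀ j : ι, dist z (x i) ≤ dist z (x j)}

/-- `C` is a complement of the point `t` in the space `Y`: the closure of one of the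
connected components of `Y ∖ {t}`. -/
def IsComplementOf {Y : Type u} [TopologicalSpace Y] (t : Y) (C : Set Y) : Prop :=
  ∃ y : Y, y ≠ t ∧ C = closure (connectedComponentIn {t}ᶜ y)

/-- `t` is a *cell splitter* for the Voronoi cell with center `x i`: each complement `C`
of `t` satisfies `vol(h⁻¹(C) ∩ B(xᵢ, ε/2) ∩ Vᵢ) ≤ (1/2)·vol(B(xᵢ, ε/2) ∩ Vᵢ)`. -/
def IsCellSplitter {M Y : Type u} [MetricSpace M] [MeasurableSpace M]
    [TopologicalSpace Y] {ι : Type u} (vol : Measure M) (h : M → Y) (x : ι → M)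
    (ε : ℝ) (i : ι) (t : Y) : Prop :=
  ∀ C : Set Y, IsComplementOf t C →
    vol (h ⁻¹' C ∩ Metric.closedBall (x i) (ε / 2) ∩ voronoiCell x i) ≤
      vol (Metric.closedBall (x i) (ε / 2) ∩ voronoiCell x i) / 2

/-- The Voronoi cells with centers `x i` and `x j` lie on the same side of the level set
`h⁻¹(t)`: there is a complement `C` of `t` such that the majority (more than half) of the
volume of the `ε/2`-ball portion of each of the two cells lies in `h⁻¹(C)`.  For a
regular point `t`, the polyhedral surface `Σ_t` is the boundary between the two classes
of Voronoi cells determined by this relation, so `Σ_t` contains the common face `Φ` of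
two adjacent Voronoi cells exactly when they do *not* lie on the same side. -/
def SameSide {M Y : Type u} [MetricSpace M] [MeasurableSpace M] [TopologicalSpace Y]
    {ι : Type u} (vol : Measure M) (h : M → Y) (x : ι → M) (ε : ℝ) (t : Y)
    (i j : ι) : Prop :=
  ∃ C : Set Y, IsComplementOf t C ∧
    vol (Metric.closedBall (x i) (ε / 2) ∩ voronoiCell x i) <
      2 * vol (h ⁻¹' C ∩ Metric.closedBall (x i) (ε / 2) ∩ voronoiCell x i) ∧
    vol (Metric.closedBall (x j) (ε / 2) ∩ voronoiCell x j) <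
      2 * vol (h ⁻¹' C ∩ Metric.closedBall (x j) (ε / 2) ∩ voronoiCell x j)

/-- The geodesic segment `[t₁, t₂]` in a tree `Y`: the intersection of all connected
subsets of `Y` containing both `t₁` and `t₂` (in a tree this is the unique embedded path
from `t₁` to `t₂`). -/
def treeSegment {Y : Type u} [TopologicalSpace Y] (t₁ t₂ : Y) : Set Y :=
  ⋂₀ {C : Set Y | IsPreconnected C ∧ t₁ ∈ C ∧ t₂ ∈ C}

/-- A component of `{t}ᶜ` whose closure carries more than half of the volume of a cell contains
every splitter of that cell. -/
lemma mem_of_majority {M Y : Type u} [MetricSpace M] [MeasurableSpace M]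
    [TopologicalSpace Y] {ι : Type u} {vol : Measure M} {h : M → Y} {x : ι → M}
    {ε : ℝ} {i : ι} {s t y : Y} (hs : IsCellSplitter vol h x ε i s) (hy : y ≠ t)
    (hmaj : vol (Metric.closedBall (x i) (ε / 2) ∩ voronoiCell x i) / 2 <
      vol (h ⁻¹' closure (connectedComponentIn {t}ᶜ y) ∩
        Metric.closedBall (x i) (ε / 2) ∩ voronoiCell x i)) :
    s ∈ connectedComponentIn {t}ᶜ y := by
  by_contra hsD
  have hyD : y ∈ connectedComponentIn {t}ᶜ y := mem_connectedComponentIn hy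
  have hys : y ≠ s := fun e => hsD (e ▸ hyD)
  have hsub : connectedComponentIn {t}ᶜ y ⊆ connectedComponentIn {s}ᶜ y :=
    isPreconnected_connectedComponentIn.subset_connectedComponentIn hyD
      fun z hz hzs => hsD (Set.mem_singleton_iff.1 hzs ▸ hz)
  refine absurd (hmaj.trans_le ((measure_mono ?_).trans (hs _ ⟨y, hys, rfl⟩))) (lt_irrefl _)
  gcongr

/-- If `t` is not a splitter of a cell but `s` is, then the component of `{t}ᶜ` containing `s`
carries more than half of the volume of the cell. -/
lemma majority_of_not_splitter {M Y : Type u} [MetricSpace M] [MeasurableSpace M]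
    [TopologicalSpace Y] {ι : Type u} {vol : Measure M} {h : M → Y} {x : ι → M}
    {ε : ℝ} {i : ι} {s t : Y} (hs : IsCellSplitter vol h x ε i s)
    (ht : ¬ IsCellSplitter vol h x ε i t) :
    vol (Metric.closedBall (x i) (ε / 2) ∩ voronoiCell x i) / 2 <
      vol (h ⁻¹' closure (connectedComponentIn {t}ᶜ s) ∩
        Metric.closedBall (x i) (ε / 2) ∩ voronoiCell x i) := by
  unfold IsCellSplitter at ht
  push Not at ht
  obtain ⟨_, ⟨y, hy, rfl⟩, hmaj⟩ := ht
  rwa [← connectedComponentIn_eq (mem_of_majority hs hy hmaj)]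

lemma ennreal_half_lt_iff {v m : ENNReal} : v / 2 < m ↔ v < 2 * m := by
  rw [ENNReal.div_lt_iff (by simp) (by simp), mul_comm]

/-- the Claim in Proposition 2.12 of Hoffoss–Maher's graph-width
paper.

Let `Φ` be a face of the Voronoi decomposition of `M̃` shared by the Voronoi cells
`V(x₁)` and `V(x₂)` (so `Φ = V(x₁) ∩ V(x₂)` is nonempty), with cell splitters `t₁` and
`t₂` respectively, with respect to the Morse function `h : M̃ → X̃` to the tree `X̃`.
Then for a regular point `t ∈ X̃` (a point which is neither a cell splitter nor a
critical point of `h`), the polyhedral surface `Σ_t` contains the face `Φ` — that is, the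
two cells lie on opposite sides of `h⁻¹(t)` — if and only if `t` lies on the geodesic in
`X̃` from `t₁` to `t₂`.

Abstract parameters: `IsTree` (for the target `X̃` of `h`), `IsMorse`, and
`IsCriticalPoint h t`; `vol` is the volume measure of `M̃`, and the Voronoi decomposition
arises from the maximal `ε`-separated family of centers `x` (hypotheses `hsep`,
`hmax`). -/
theorem face_in_polyhedral_surface_iff_on_geodesic
    (IsTree : ∀ (Y : Type u) [TopologicalSpace Y], Prop)
    (IsMorse : ∀ {M Y : Type u} [MetricSpace M] [TopologicalSpace Y], (M → Y) → Prop)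
    (IsCriticalPoint : ∀ {M Y : Type u} [MetricSpace M] [TopologicalSpace Y],
      (M → Y) → Y → Prop)
    (Mt : Type u) [MetricSpace Mt] [MeasurableSpace Mt] [BorelSpace Mt]
    (vol : Measure Mt)
    (Xt : Type u) [TopologicalSpace Xt] (hXt : IsTree Xt)
    (h : Mt → Xt) (hh : IsMorse h)
    (ε : ℝ) (hε : 0 < ε) {ι : Type u} (x : ι → Mt)
    (hsep : ∀ i j : ι, i ≠ j → ε ≤ dist (x i) (x j))
    (hmax : ∀ y : Mt, ∃ i : ι, dist y (x i) < ε)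
    (i₁ i₂ : ι) (hne : i₁ ≠ i₂)
    (hface : (voronoiCell x i₁ ∩ voronoiCell x i₂).Nonempty)
    (t₁ t₂ : Xt)
    (ht₁ : IsCellSplitter vol h x ε i₁ t₁) (ht₂ : IsCellSplitter vol h x ε i₂ t₂)
    (t : Xt) (htreg : (∀ i : ι, ¬ IsCellSplitter vol h x ε i t) ∧
      ¬ IsCriticalPoint h t) :
    ¬ SameSide vol h x ε t i₁ i₂ ↔ t ∈ treeSegment t₁ t₂ := by
  simp only [SameSide, ← ennreal_half_lt_iff]
  rw [not_iff_comm]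
  constructor
  · intro hseg
    simp only [treeSegment, Set.mem_sInter, Set.mem_ofPred_eq, not_forall] at hseg
    obtain ⟨S, ⟨hS, h₁, h₂⟩, htS⟩ := hseg
    have h₂D : t₂ ∈ connectedComponentIn {t}ᶜ t₁ :=
      hS.subset_connectedComponentIn h₁ (Set.subset_compl_singleton_iff.2 htS) h₂
    refine ⟨_, ⟨t₁, fun e => htS (e ▸ h₁), rfl⟩, majority_of_not_splitter ht₁ (htreg.1 i₁), ?_⟩
    rw [connectedComponentIn_eq h₂D]
    exact majority_of_not_splitter ht₂ (htreg.1 i₂)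
  · rintro ⟨_, ⟨y, hy, rfl⟩, h₁, h₂⟩ hseg
    exact connectedComponentIn_subset _ _ (hseg _ ⟨isPreconnected_connectedComponentIn,
      mem_of_majority ht₁ hy h₁, mem_of_majority ht₂ hy h₂⟩) rfl
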